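/- arXiv:2403.18497 — 2 statements merged into one kernel-verified Lean document; each statement's English description precedes it below -/
import Mathlib

section
/- Let (G, w, k) be a yes-instance of minimum sum vertex cover and let v be a vertex of G such that every neighbor x of v satisfies d(x) > k. Then in any optimal solution σ of (G, w, k), σ(v) > σ(x) for every neighbor x of v. -/
/-!
Count positions from `0`. Every neighbor `x` of `v` has position below `k`: otherwise all of its
more than `k` neighbors would have to occupy the first `k` positions (`pos_lt_of_degree_gt`).

Exchanging the vertices at positions `m` and `m + 1` raises by at most one the cost of the edges
of cost `m + 1`, lowers by one the cost of the edges of cost `m + 2`, and changes no other cost.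
Hence in an optimal solution the number of edges of a given cost is nonincreasing as long as the
positions exchanged stay below `k` (`levelCount_antitone`).

Suppose `v` at position `i` has a later neighbor, and let `x`, at position `l`, be the first such.
All later neighbors of `v` lie in positions `l, …, k - 1`, so there are at most `k - l` of them. At
most `l` neighbors of `x` are earlier than `x`, so at least `k + 1 - l` are later. Thus position `l`
is responsible for more edges than position `i < l < k`, contradicting monotonicity.
-/

/-- The 1-indexed cost of an edge under an ordering `σ` of the vertices. -/
def edgeCost {V : Type*} [Fintype V] (σ : V ≃ Fin (Fintype.card V)) : Sym2 V → ℕ :=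
  Sym2.lift ⟨fun u v => min ((σ u : ℕ) + 1) ((σ v : ℕ) + 1), fun u v => by
    simp [min_comm]⟩

/-- The total cost of a solution `σ`: the sum of the costs of all edges. -/
def totalCost {V : Type*} [Fintype V] [DecidableEq V] (G : SimpleGraph V)
    [DecidableRel G.Adj] (σ : V ≃ Fin (Fintype.card V)) : ℕ :=
  ∑ e ∈ G.edgeFinset, edgeCost σ e

/-- The maximum cost of the solution `σ` is at most `k`. -/
def MaxCostLe {V : Type*} [Fintype V] (G : SimpleGraph V)
    (σ : V ≃ Fin (Fintype.card V)) (k : ℕ) : Prop :=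
  ∀ ⦃u v : V⦄, G.Adj u v → min ((σ u : ℕ) + 1) ((σ v : ℕ) + 1) ≤ k

/-- A solution `σ` is feasible for `(G, w, k)` if its maximum cost is at most `k`
and its total cost is at most `w`. -/
def Feasible {V : Type*} [Fintype V] [DecidableEq V] (G : SimpleGraph V)
    [DecidableRel G.Adj] (σ : V ≃ Fin (Fintype.card V)) (w k : ℕ) : Prop :=
  MaxCostLe G σ k ∧ totalCost G σ ≤ w

/-- `(G, w, k)` is a yes-instance if it admits a feasible solution. -/
def YesInstance {V : Type*} [Fintype V] [DecidableEq V] (G : SimpleGraph V)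
    [DecidableRel G.Adj] (w k : ℕ) : Prop :=
  ∃ σ : V ≃ Fin (Fintype.card V), Feasible G σ w k

/-- A solution `σ` is optimal for parameter `k` if its maximum cost is at most `k`
and its total cost is minimum among all solutions with maximum cost at most `k`. -/
def Optimal {V : Type*} [Fintype V] [DecidableEq V] (G : SimpleGraph V)
    [DecidableRel G.Adj] (σ : V ≃ Fin (Fintype.card V)) (k : ℕ) : Prop :=
  MaxCostLe G σ k ∧
    ∀ σ' : V ≃ Fin (Fintype.card V), MaxCostLe G σ' k → totalCost G σ ≤ totalCost G σ'

/-- `r G σ i` is the number of edges of cost `i` (where the position `i` is 0-indexed as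
an element of `Fin n`): the number of neighbors of the vertex at position `i` that occur
at later positions. -/
def r {V : Type*} [Fintype V] (G : SimpleGraph V) [DecidableRel G.Adj]
    (σ : V ≃ Fin (Fintype.card V)) (i : Fin (Fintype.card V)) : ℕ :=
  ((G.neighborFinset (σ.symm i)).filter fun x => i < σ x).card

/-- The number of edges that take their cost from the 0-indexed position `m`, i.e. the edges of
1-indexed cost `m + 1`. -/
def levelCount {V : Type*} [Fintype V] [DecidableEq V] (G : SimpleGraph V)
    [DecidableRel G.Adj] (σ : V ≃ Fin (Fintype.card V)) (m : ℕ) : ℕ :=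
  (G.edgeFinset.filter fun e => edgeCost σ e = m + 1).card

lemma edgeCost_mk {V : Type*} [Fintype V] (σ : V ≃ Fin (Fintype.card V)) (a b : V) :
    edgeCost σ s(a, b) = min ((σ a : ℕ) + 1) ((σ b : ℕ) + 1) := rfl

/-- The edges taking their cost from the position of `u` are the edges from `u` to its later
neighbors. -/
lemma levelCount_eq {V : Type*} [Fintype V] [DecidableEq V] (G : SimpleGraph V)
    [DecidableRel G.Adj] (σ : V ≃ Fin (Fintype.card V)) (u : V) :
    levelCount G σ (σ u) = ((G.neighborFinset u).filter fun x => σ u < σ x).card := by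
  unfold levelCount
  symm
  apply Finset.card_bij (fun x _ => s(u, x))
  · intro x hx
    simp only [Finset.mem_filter, SimpleGraph.mem_neighborFinset] at hx
    have h : (σ u : ℕ) < σ x := hx.2
    simp only [Finset.mem_filter, SimpleGraph.mem_edgeFinset, SimpleGraph.mem_edgeSet,
      edgeCost_mk]
    exact ⟨hx.1, by omega⟩
  · intro a _ b _ h
    exact Sym2.congr_right.mp h
  · intro e
    induction e using Sym2.ind with
    | _ a b =>
      intro he
      simp only [Finset.mem_filter, SimpleGraph.mem_edgeFinset, SimpleGraph.mem_edgeSet,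
        edgeCost_mk] at he
      obtain ⟨hab, hc⟩ := he
      have hne : (σ a : ℕ) ≠ σ b := fun h => hab.ne (σ.injective (Fin.ext h))
      rcases lt_or_gt_of_ne hne with h | h
      · have hau : a = u := σ.injective (Fin.ext (by omega))
        subst hau
        exact ⟨b, by simpa [hab] using h, rfl⟩
      · have hbu : b = u := σ.injective (Fin.ext (by omega))
        subst hbu
        exact ⟨a, by simpa [hab.symm] using h, Sym2.eq_swap⟩

/-- Exchanging the vertices at two consecutive positions below `k` shows that, in an optimal
solution, the later of these positions is not responsible for more edges. -/
lemma levelCount_succ_le {V : Type*} [Fintype V] [DecidableEq V] (G : SimpleGraph V)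
    [DecidableRel G.Adj] (k : ℕ) (σ : V ≃ Fin (Fintype.card V)) (hopt : Optimal G σ k) (m : ℕ)
    (hmk : m + 1 < k) (hmn : m + 1 < Fintype.card V) :
    levelCount G σ (m + 1) ≤ levelCount G σ m := by
  let p : Fin (Fintype.card V) := ⟨m, by omega⟩
  let q : Fin (Fintype.card V) := ⟨m + 1, hmn⟩
  let τ : V ≃ Fin (Fintype.card V) := σ.trans (Equiv.swap p q)
  have hτ : ∀ u, ((σ u : ℕ) = m ∧ (τ u : ℕ) = m + 1) ∨ ((σ u : ℕ) = m + 1 ∧ (τ u : ℕ) = m) ∨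
      ((σ u : ℕ) ≠ m ∧ (σ u : ℕ) ≠ m + 1 ∧ (τ u : ℕ) = σ u) := by
    intro u
    by_cases h1 : σ u = p
    · left
      simp [τ, h1, p, q]
    · by_cases h2 : σ u = q
      · right; left
        simp [τ, h2, p, q]
      · right; right
        refine ⟨fun h => h1 (Fin.ext h), fun h => h2 (Fin.ext h), ?_⟩
        simp [τ, Equiv.swap_apply_of_ne_of_ne h1 h2]
  have hmax : MaxCostLe G τ k := by
    intro a b hab
    have := hopt.1 hab
    have ha := hτ a
    have hb := hτ b
    omega
  have hle := hopt.2 τ hmax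
  have hpt : ∀ e ∈ G.edgeFinset,
      edgeCost τ e + (if edgeCost σ e = m + 1 + 1 then 1 else 0) ≤
        edgeCost σ e + (if edgeCost σ e = m + 1 then 1 else 0) := by
    intro e
    induction e using Sym2.ind with
    | _ a b =>
      intro he
      have hab : G.Adj a b := by simpa using he
      have hne : (σ a : ℕ) ≠ σ b := fun h => hab.ne (σ.injective (Fin.ext h))
      have hcσ := edgeCost_mk σ a b
      have hcτ := edgeCost_mk τ a b
      have ha := hτ a
      have hb := hτ b
      split_ifs <;> omega
  have hsum := Finset.sum_le_sum hpt
  simp only [Finset.sum_add_distrib, ← Finset.card_filter] at hsum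
  unfold totalCost at hle
  unfold levelCount
  omega

lemma levelCount_antitone {V : Type*} [Fintype V] [DecidableEq V] (G : SimpleGraph V)
    [DecidableRel G.Adj] (k : ℕ) (σ : V ≃ Fin (Fintype.card V)) (hopt : Optimal G σ k) (i j : ℕ)
    (hij : i ≤ j) (hjk : j < k) (hjn : j < Fintype.card V) :
    levelCount G σ j ≤ levelCount G σ i := by
  induction j, hij using Nat.le_induction with
  | base => exact le_rfl
  | succ j _ ih =>
    exact (levelCount_succ_le G k σ hopt j hjk hjn).trans (ih (by omega) (by omega))

/-- A set of vertices whose positions lie in `[a, b)` has at most `b - a` elements. -/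
lemma card_le_of_pos_mem {V : Type*} [Fintype V] (σ : V ≃ Fin (Fintype.card V)) (s : Finset V)
    (a b : ℕ) (h : ∀ y ∈ s, a ≤ (σ y : ℕ) ∧ (σ y : ℕ) < b) : s.card ≤ b - a := by
  rw [← Nat.card_Ico]
  apply Finset.card_le_card_of_injOn (fun y => (σ y : ℕ))
  · intro y hy
    simpa using h y hy
  · intro y _ z _ hyz
    exact σ.injective (Fin.ext hyz)

/-- A vertex of degree more than `k` occupies one of the first `k` positions. -/
lemma pos_lt_of_degree_gt {V : Type*} [Fintype V] [DecidableEq V] (G : SimpleGraph V)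
    [DecidableRel G.Adj] (k : ℕ) (σ : V ≃ Fin (Fintype.card V)) (hmax : MaxCostLe G σ k) (x : V)
    (hx : k < G.degree x) : (σ x : ℕ) < k := by
  by_contra hk
  have := card_le_of_pos_mem σ (G.neighborFinset x) 0 k (fun y hy => by
    have := hmax ((G.mem_neighborFinset x y).mp hy)
    omega)
  rw [G.card_neighborFinset_eq_degree] at this
  omega

/-- if every neighbor `x` of `v` satisfies `d(x) > k`, then in any optimal
solution `σ` of a yes-instance `(G, w, k)` we have `σ(v) > σ(x)` for every neighbor `x`
of `v`. -/
theorem statement6 {V : Type*} [Fintype V] [DecidableEq V] (G : SimpleGraph V)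
    [DecidableRel G.Adj] (w k : ℕ) (v : V)
    (hnb : ∀ x : V, G.Adj v x → k < G.degree x)
    (σ : V ≃ Fin (Fintype.card V)) (hyes : YesInstance G w k) (hopt : Optimal G σ k) :
    ∀ x : V, G.Adj v x → σ x < σ v := by
  by_contra! hcon
  -- `x` is the first neighbor of `v` placed after `v`.
  obtain ⟨x, hx, hmin⟩ := Finset.exists_min_image
    ((G.neighborFinset v).filter fun x => σ v < σ x) (fun x => (σ x : ℕ)) (by
      obtain ⟨x, hvx, hle⟩ := hcon
      have hne : σ v ≠ σ x := fun h => hvx.ne (σ.injective h)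
      exact ⟨x, by simpa [hvx] using lt_of_le_of_ne hle hne⟩)
  simp only [Finset.mem_filter, SimpleGraph.mem_neighborFinset] at hx hmin
  have hxk := pos_lt_of_degree_gt G k σ hopt.1 x (hnb x hx.1)
  have hmono := levelCount_antitone G k σ hopt (σ v) (σ x) hx.2.le hxk (σ x).isLt
  rw [levelCount_eq, levelCount_eq] at hmono
  have hlater_v := card_le_of_pos_mem σ ((G.neighborFinset v).filter fun y => σ v < σ y)
    (σ x) k (fun y hy => by
      simp only [Finset.mem_filter, SimpleGraph.mem_neighborFinset] at hy
      exact ⟨hmin y hy, pos_lt_of_degree_gt G k σ hopt.1 y (hnb y hy.1)⟩)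
  have hearlier_x := card_le_of_pos_mem σ ((G.neighborFinset x).filter fun y => ¬ σ x < σ y)
    0 (σ x) (fun y hy => by
      simp only [Finset.mem_filter, SimpleGraph.mem_neighborFinset, not_lt] at hy
      have hne : σ y ≠ σ x := fun h => hy.1.ne (σ.injective h.symm)
      have hlt : σ y < σ x := lt_of_le_of_ne hy.2 hne
      exact ⟨Nat.zero_le _, hlt⟩)
  have hsplit := Finset.card_filter_add_card_filter_not (s := G.neighborFinset x)
    (fun y => σ x < σ y)
  rw [G.card_neighborFinset_eq_degree] at hsplit
  have hdeg := hnb x hx.1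
  omega
end

section
/- Let (G, w, k) be a yes-instance of minimum sum vertex cover, let σ be an optimal solution of (G, w, k), and suppose σ(v) = 1 for a vertex v all of whose neighbors belong to some minimum vertex cover of G (in particular, this holds when v itself is not in that minimum vertex cover). Then r_σ(i) ≤ τ for every position i, where τ is the vertex cover number of G. -/
/-- `S` is a vertex cover of `G`: every edge has at least one end in `S`. -/
def IsVertexCover {V : Type*} (G : SimpleGraph V) (S : Finset V) : Prop :=
  ∀ ⦃u v : V⦄, G.Adj u v → u ∈ S ∨ v ∈ S

/-- The edges joining `c` to a vertex at a position later than `m`. -/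
def laterEdges {V : Type*} [Fintype V] [DecidableEq V] (G : SimpleGraph V) [DecidableRel G.Adj]
    (σ : V ≃ Fin (Fintype.card V)) (c : V) (m : ℕ) : Finset (Sym2 V) :=
  ((G.neighborFinset c).filter fun x => m < (σ x : ℕ)).image fun x => s(c, x)

lemma card_laterEdges {V : Type*} [Fintype V] [DecidableEq V] (G : SimpleGraph V)
    [DecidableRel G.Adj] (σ : V ≃ Fin (Fintype.card V)) (c : V) (m : ℕ) :
    (laterEdges G σ c m).card = ((G.neighborFinset c).filter fun x => m < (σ x : ℕ)).card := by
  apply Finset.card_image_of_injective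
  exact fun x y h => Sym2.congr_right.1 h

lemma laterEdges_subset {V : Type*} [Fintype V] [DecidableEq V] (G : SimpleGraph V)
    [DecidableRel G.Adj] (σ : V ≃ Fin (Fintype.card V)) (c : V) (m : ℕ) :
    laterEdges G σ c m ⊆ G.edgeFinset := by
  intro e he
  simp only [laterEdges, Finset.mem_image, Finset.mem_filter, SimpleGraph.mem_neighborFinset] at he
  obtain ⟨x, ⟨hx, -⟩, rfl⟩ := he
  simpa using hx

lemma mem_laterEdges {V : Type*} [Fintype V] [DecidableEq V] (G : SimpleGraph V)
    [DecidableRel G.Adj] (σ : V ≃ Fin (Fintype.card V)) (c : V) (m : ℕ) {x y : V}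
    (h : G.Adj x y) :
    s(x, y) ∈ laterEdges G σ c m ↔ (x = c ∧ m < (σ y : ℕ)) ∨ (y = c ∧ m < (σ x : ℕ)) := by
  have h' := h.symm
  simp only [laterEdges, Finset.mem_image, Finset.mem_filter, SimpleGraph.mem_neighborFinset,
    Sym2.eq_iff]
  constructor
  · rintro ⟨z, ⟨hz, hm⟩, ⟨rfl, rfl⟩ | ⟨rfl, rfl⟩⟩
    · exact Or.inl ⟨rfl, hm⟩
    · exact Or.inr ⟨rfl, hm⟩
  · rintro (⟨rfl, hm⟩ | ⟨rfl, hm⟩)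
    · exact ⟨y, ⟨h, hm⟩, Or.inl ⟨rfl, rfl⟩⟩
    · exact ⟨x, ⟨h', hm⟩, Or.inr ⟨rfl, rfl⟩⟩

lemma sum_indicator_laterEdges {V : Type*} [Fintype V] [DecidableEq V] (G : SimpleGraph V)
    [DecidableRel G.Adj] (σ : V ≃ Fin (Fintype.card V)) (c : V) (m : ℕ) :
    ∑ e ∈ G.edgeFinset, (if e ∈ laterEdges G σ c m then 1 else 0)
      = (laterEdges G σ c m).card := by
  rw [Finset.sum_boole, Finset.filter_mem_eq_inter,
    Finset.inter_eq_right.2 (laterEdges_subset G σ c m)]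
  simp

/-- In an optimal solution, `r` does not increase from one position to the next: otherwise
exchanging the two vertices keeps the maximum cost at most `k` and lowers the total cost. -/
lemma r_succ_le {V : Type*} [Fintype V] [DecidableEq V] (G : SimpleGraph V)
    [DecidableRel G.Adj] (k : ℕ) (σ : V ≃ Fin (Fintype.card V)) (hopt : Optimal G σ k)
    (i j : Fin (Fintype.card V)) (hij : (j : ℕ) = i + 1) : r G σ j ≤ r G σ i := by
  by_contra! hlt
  obtain ⟨a, rfl⟩ := σ.surjective i
  obtain ⟨b, rfl⟩ := σ.surjective j
  have hrb : r G σ (σ b) = (laterEdges G σ b (σ b)).card := by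
    rw [card_laterEdges, r]
    congr 1
    ext x
    simp only [Finset.mem_filter, SimpleGraph.mem_neighborFinset, Equiv.symm_apply_apply,
      Fin.lt_def]
  -- Only an inequality: `r` at `a` also counts the edge `ab`, if present.
  have hra : (laterEdges G σ a (σ b)).card ≤ r G σ (σ a) := by
    rw [card_laterEdges]
    apply Finset.card_le_card
    intro x
    simp only [Finset.mem_filter, SimpleGraph.mem_neighborFinset, Equiv.symm_apply_apply,
      Fin.lt_def]
    rintro ⟨h1, h2⟩
    exact ⟨h1, by omega⟩
  have hk : (σ b : ℕ) + 1 ≤ k := by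
    have hpos : 0 < r G σ (σ b) := by omega
    obtain ⟨x, hx⟩ := Finset.card_pos.1 hpos
    simp only [Finset.mem_filter, Equiv.symm_apply_apply, Fin.lt_def,
      SimpleGraph.mem_neighborFinset] at hx
    have := hopt.1 hx.1
    omega
  set ρ : V ≃ Fin (Fintype.card V) := σ.trans (Equiv.swap (σ a) (σ b)) with hρ
  have ta : ρ a = σ b := by simp [hρ]
  have tb : ρ b = σ a := by simp [hρ]
  have tx : ∀ x, x ≠ a → x ≠ b → ρ x = σ x := fun x h1 h2 => by
    simp only [hρ, Equiv.trans_apply]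
    exact Equiv.swap_apply_of_ne_of_ne (fun h => h1 (σ.injective h)) (fun h => h2 (σ.injective h))
  have na : ∀ x, x ≠ a → (σ x : ℕ) ≠ σ a := fun x h h' => h (σ.injective (Fin.ext h'))
  have nb : ∀ x, x ≠ b → (σ x : ℕ) ≠ σ b := fun x h h' => h (σ.injective (Fin.ext h'))
  have hab : a ≠ b := by rintro rfl; omega
  have cases : ∀ x, (x = a ∧ x ≠ b ∧ (σ x : ℕ) = σ a ∧ (ρ x : ℕ) = σ b) ∨
      (x = b ∧ x ≠ a ∧ (σ x : ℕ) = σ b ∧ (ρ x : ℕ) = σ a) ∨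
      (x ≠ a ∧ x ≠ b ∧ (σ x : ℕ) ≠ σ a ∧ (σ x : ℕ) ≠ σ b ∧ (ρ x : ℕ) = σ x) := by
    intro x
    by_cases h1 : x = a
    · subst h1; simp [hab, ta]
    · by_cases h2 : x = b
      · subst h2; simp [h1, tb]
      · simp [h1, h2, tx x h1 h2, na x h1, nb x h2]
  have hmax : MaxCostLe G ρ k := by
    intro x y hxy
    have := hopt.1 hxy
    rcases cases x with hx | hx | hx <;> rcases cases y with hy | hy | hy <;> omega
  have hcost : totalCost G ρ + (laterEdges G σ b (σ b)).card
      ≤ totalCost G σ + (laterEdges G σ a (σ b)).card := by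
    rw [← sum_indicator_laterEdges, ← sum_indicator_laterEdges, totalCost, totalCost,
      ← Finset.sum_add_distrib, ← Finset.sum_add_distrib]
    apply Finset.sum_le_sum
    intro e
    induction e using Sym2.ind with
    | _ x y =>
      intro he
      have hxy : G.Adj x y := by simpa using he
      have hne := hxy.ne
      simp only [mem_laterEdges G σ _ _ hxy, edgeCost, Sym2.lift_mk]
      rcases cases x with hx | hx | hx <;> rcases cases y with hy | hy | hy <;>
        first
        | exact absurd (hx.1.trans hy.1.symm) hne
        | (simp only [hx.1, hx.2.1, hy.1, hy.2.1, hab, hab.symm, true_and, false_and, or_false,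
            false_or]
           grind)
  have := hopt.2 ρ hmax
  omega

/-- let `σ` be an optimal solution of a yes-instance `(G, w, k)` whose first
vertex `v = σ⁻¹(1)` has all its neighbors inside some minimum vertex cover `S*` of `G`.
Then `r_σ(i) ≤ τ = |S*|` for every position `i`. -/
theorem statement16 {V : Type*} [Fintype V] [DecidableEq V] (G : SimpleGraph V)
    [DecidableRel G.Adj] (w k : ℕ) (σ : V ≃ Fin (Fintype.card V))
    (hyes : YesInstance G w k) (hopt : Optimal G σ k)
    (Sstar : Finset V) (hS : IsVertexCover G Sstar)
    (hmin : ∀ T : Finset V, IsVertexCover G T → Sstar.card ≤ T.card)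
    (v : V) (hv1 : (σ v : ℕ) = 0) (hnb : ∀ x : V, G.Adj v x → x ∈ Sstar) :
    ∀ i : Fin (Fintype.card V), r G σ i ≤ Sstar.card := by
  have hr : ∀ m (hm : m < Fintype.card V), r G σ ⟨m, hm⟩ ≤ Sstar.card := by
    intro m
    induction m with
    | zero =>
      intro hm
      have h0 : σ.symm ⟨0, hm⟩ = v := by
        rw [Equiv.symm_apply_eq]
        exact Fin.ext hv1.symm
      apply Finset.card_le_card
      intro x hx
      rw [h0, Finset.mem_filter, SimpleGraph.mem_neighborFinset] at hx
      exact hnb x hx.1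
    | succ m ih =>
      intro hm
      exact (r_succ_le G k σ hopt ⟨m, by omega⟩ ⟨m + 1, hm⟩ rfl).trans (ih _)
  exact fun i => hr i i.2
end
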